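/- There exists a finite powerful 2-group G such that the subgroup Ω₂(G²) is not abelian, and hence is not powerful. (For instance, G of order 2¹¹ with presentation ⟨a, b, c ∣ a^{2³} = b^{2³} = c^{2⁵} = 1, [a,c] = [b,c] = 1, [a,b] = c^{2²}⟩ works.) -/

import Mathlib

/-!
Let `G` have nilpotency class at most `2`, with all commutators of order dividing `8`. Commutators
are then bimultiplicative, so those of elements of `G²` have order dividing `2`, and
`(x * y) ^ 4 = x ^ 4 * y ^ 4 * ⁅y, x⁆ ^ 6` shows that the fourth power is multiplicative on `G²`.
Hence `Ω₂(G²)` has exponent dividing `4`, and it can only be powerful if it is abelian. But if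
`a ^ 8 = b ^ 8 = 1` and `⁅a, b⁆ ^ 4 ≠ 1`, then `a ^ 2` and `b ^ 2` lie in `Ω₂(G²)` and do not
commute, because `⁅a ^ 2, b ^ 2⁆ = ⁅a, b⁆ ^ 4`.

The group `⟨a, b, c ∣ a ^ 8 = b ^ 8 = c ^ 32 = 1, [a, c] = [b, c] = 1, [a, b] = c ^ 4⟩` is the
Heisenberg group of the pairing `(i, j) ↦ 4 i j` from `ℤ/8 × ℤ/8` to `ℤ/32`; it is powerful
because the values of the pairing are divisible by `4`.
-/

/-- The subgroup generated by the `n`-th powers of the elements of `H`. -/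
def subgroupPow {G : Type*} [Group G] (H : Subgroup G) (n : ℕ) : Subgroup G :=
  Subgroup.closure {x | ∃ h ∈ H, h ^ n = x}

/-- `Ω_i(H)`: the subgroup generated by the elements of `H` whose order divides `p ^ i`. -/
def omegaSubgroup {G : Type*} [Group G] (p i : ℕ) (H : Subgroup G) : Subgroup G :=
  Subgroup.closure {x | x ∈ H ∧ x ^ p ^ i = 1}

/-- A finite `p`-group `G` is powerful if `[G,G] ≤ G^p` when `p` is odd,
and `[G,G] ≤ G^4` when `p = 2`. -/
def IsPowerful (p : ℕ) (G : Type*) [Group G] : Prop :=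
  if p = 2 then commutator G ≤ subgroupPow (⊤ : Subgroup G) 4
  else commutator G ≤ subgroupPow (⊤ : Subgroup G) p

/-- The subgroup of `n`-th powers of the whole group is normal (indeed characteristic). -/
instance subgroupPow_top_normal {G : Type*} [Group G] (n : ℕ) :
    (subgroupPow (⊤ : Subgroup G) n).Normal := by
  constructor
  intro x hx g
  have key : Subgroup.map (MulAut.conj g).toMonoidHom (subgroupPow (⊤ : Subgroup G) n)
      ≤ subgroupPow (⊤ : Subgroup G) n := by
    rw [subgroupPow, MonoidHom.map_closure]
    apply Subgroup.closure_le _ |>.mpr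
    rintro y ⟨z, ⟨h, -, rfl⟩, rfl⟩
    exact Subgroup.subset_closure ⟨(MulAut.conj g) h, trivial, by
      simp [((MulAut.conj g).toMonoidHom.map_pow h n).symm]⟩
  have hmem : (MulAut.conj g) x ∈
      Subgroup.map (MulAut.conj g).toMonoidHom (subgroupPow (⊤ : Subgroup G) n) :=
    Subgroup.mem_map_of_mem _ hx
  simpa [MulAut.conj_apply] using key hmem

/-- A powerfully central chain `{1} = H 0 ≤ H 1 ≤ ⋯ ≤ H n = G` of length `n`:
`[H (k+1), G] ≤ (H k)^p` for all `k < n`. -/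
def IsPowerfullyCentralChain (p : ℕ) {G : Type*} [Group G] (n : ℕ) (H : ℕ → Subgroup G) : Prop :=
  H 0 = ⊥ ∧ H n = ⊤ ∧ (∀ k, k < n → H k ≤ H (k + 1)) ∧
    ∀ k, k < n → ⁅H (k + 1), (⊤ : Subgroup G)⁆ ≤ subgroupPow (H k) p

/-- A group is powerfully nilpotent if it is powerful and admits a powerfully central chain. -/
def IsPowerfullyNilpotent (p : ℕ) (G : Type*) [Group G] : Prop :=
  IsPowerful p G ∧ ∃ (n : ℕ) (H : ℕ → Subgroup G), IsPowerfullyCentralChain p n H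

/-- The powerful nilpotency class: the least possible length of a powerfully central chain. -/
noncomputable def powerfulNilpotencyClass (p : ℕ) (G : Type*) [Group G] : ℕ :=
  sInf {n | ∃ H : ℕ → Subgroup G, IsPowerfullyCentralChain p n H}

open Subgroup
open scoped commutatorElement

section PowerAndOmegaSubgroups

variable {G : Type*} [Group G]

theorem subgroupPow_le_iff {H K : Subgroup G} {n : ℕ} :
    subgroupPow H n ≤ K ↔ ∀ h ∈ H, h ^ n ∈ K := by
  rw [subgroupPow, closure_le]
  exact ⟨fun hK h hh => hK ⟨h, hh, rfl⟩, fun hK _ ⟨h, hh, hx⟩ => hx ▸ hK h hh⟩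

theorem pow_mem_subgroupPow {H : Subgroup G} {h : G} (hh : h ∈ H) (n : ℕ) :
    h ^ n ∈ subgroupPow H n :=
  subgroupPow_le_iff.1 le_rfl h hh

theorem pow_mem_omegaSubgroup_subgroupPow {H : Subgroup G} {h : G} (hh : h ∈ H) {p i n : ℕ}
    (h_pow : h ^ (n * p ^ i) = 1) : h ^ n ∈ omegaSubgroup p i (subgroupPow H n) :=
  subset_closure ⟨pow_mem_subgroupPow hh n, by rw [← pow_mul, h_pow]⟩

theorem pow_eq_one_of_mem_omegaSubgroup {p i : ℕ} {H : Subgroup G}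
    (mul_pow_H : ∀ x ∈ H, ∀ y ∈ H, (x * y) ^ p ^ i = x ^ p ^ i * y ^ p ^ i)
    {x : G} (hx : x ∈ omegaSubgroup p i H) : x ^ p ^ i = 1 := by
  suffices x ∈ H ∧ x ^ p ^ i = 1 from this.2
  induction hx using closure_induction with
  | mem _ hx => exact hx
  | one => exact ⟨one_mem H, one_pow _⟩
  | mul x y _ _ hx hy =>
    exact ⟨mul_mem hx.1 hy.1, by rw [mul_pow_H x hx.1 y hy.1, hx.2, hy.2, one_mul]⟩
  | inv x _ hx => exact ⟨inv_mem hx.1, by rw [inv_pow, hx.2, inv_one]⟩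

theorem isPowerful_two_iff : IsPowerful 2 G ↔ commutator G ≤ subgroupPow (⊤ : Subgroup G) 4 := by
  rw [IsPowerful, if_pos rfl]

theorem IsPowerful.commute_of_pow_four_eq_one (hG : IsPowerful 2 G) (h_four : ∀ x : G, x ^ 4 = 1)
    (x y : G) : Commute x y := by
  have fourth_powers_trivial : subgroupPow (⊤ : Subgroup G) 4 ≤ ⊥ :=
    subgroupPow_le_iff.2 fun h _ => mem_bot.2 (h_four h)
  have commutator_mem : ⁅x, y⁆ ∈ commutator G := commutator_mem_commutator (mem_top x) (mem_top y)
  exact commutatorElement_eq_one_iff_commute.1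
    (mem_bot.1 (fourth_powers_trivial (isPowerful_two_iff.1 hG commutator_mem)))

end PowerAndOmegaSubgroups

section ClassTwo

variable {G : Type*} [Group G]

theorem pow_mul_of_commutatorElement_mem_center {x y : G} (h : ⁅y, x⁆ ∈ center G) (n : ℕ) :
    y ^ n * x = x * y ^ n * ⁅y, x⁆ ^ n := by
  have semiconj : SemiconjBy x (y * ⁅y, x⁆) y := by
    rw [SemiconjBy, ← mul_assoc, mem_center_iff.1 h (x * y), commutatorElement_def]
    group
  have comm : Commute y ⁅y, x⁆ := mem_center_iff.1 h y
  rw [← (semiconj.pow_right n).eq, comm.mul_pow, mul_assoc]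

theorem mul_pow_of_commutatorElement_mem_center {x y : G} (h : ⁅y, x⁆ ∈ center G) (n : ℕ) :
    (x * y) ^ n = x ^ n * y ^ n * ⁅y, x⁆ ^ n.choose 2 := by
  have central (k : ℕ) (g : G) : g * ⁅y, x⁆ ^ k = ⁅y, x⁆ ^ k * g :=
    mem_center_iff.1 (pow_mem h k) g
  induction n with
  | zero => simp
  | succ n ih =>
    calc (x * y) ^ (n + 1)
      _ = x ^ n * y ^ n * ⁅y, x⁆ ^ n.choose 2 * (x * y) := by rw [pow_succ, ih]
      _ = x ^ n * (y ^ n * x) * y * ⁅y, x⁆ ^ n.choose 2 := by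
        rw [mul_assoc _ _ (x * y), ← central]
        simp only [mul_assoc]
      _ = x ^ n * (x * y ^ n * (⁅y, x⁆ ^ n * y)) * ⁅y, x⁆ ^ n.choose 2 := by
        rw [pow_mul_of_commutatorElement_mem_center h]
        simp only [mul_assoc]
      _ = x ^ (n + 1) * y ^ (n + 1) * ⁅y, x⁆ ^ (n + 1).choose 2 := by
        rw [← central, Nat.choose_succ_succ' n 1, Nat.choose_one_right]
        simp only [pow_succ, pow_add, mul_assoc]

theorem commutatorElement_mul_left_of_mem_center {x₁ x₂ y : G} (h : ⁅x₂, y⁆ ∈ center G) :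
    ⁅x₁ * x₂, y⁆ = ⁅x₁, y⁆ * ⁅x₂, y⁆ := by
  rw [commutatorElement_mul_left_eq_conj_mul, mem_center_iff.1 h x₁, mul_inv_cancel_right,
    mem_center_iff.1 h]

theorem commutatorElement_mem_center (hG : commutator G ≤ center G) (x y : G) :
    ⁅x, y⁆ ∈ center G :=
  hG (commutator_mem_commutator (mem_top x) (mem_top y))

/-- In a group of nilpotency class at most `2`, taking the commutator with a fixed element `y` is a
homomorphism to the center. -/
def commutatorHom (hG : commutator G ≤ center G) (y : G) : G →* center G where
  toFun x := ⟨⁅x, y⁆, commutatorElement_mem_center hG x y⟩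
  map_one' := Subtype.ext (commutatorElement_one_left y)
  map_mul' _ x₂ := Subtype.ext <|
    commutatorElement_mul_left_of_mem_center (commutatorElement_mem_center hG x₂ y)

variable (hG : commutator G ≤ center G)
include hG

theorem commutatorElement_pow_left (x y : G) (n : ℕ) : ⁅x ^ n, y⁆ = ⁅x, y⁆ ^ n :=
  congrArg Subtype.val (map_pow (commutatorHom hG y) x n)

theorem commutatorElement_pow_right (x y : G) (n : ℕ) : ⁅x, y ^ n⁆ = ⁅x, y⁆ ^ n := by
  rw [← commutatorElement_inv, commutatorElement_pow_left hG, ← inv_pow, commutatorElement_inv]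

open scoped IsMulCommutative in
theorem commutatorElement_pow_eq_one_of_mem_subgroupPow {m k : ℕ} {y : G}
    (h : ∀ x : G, ⁅x, y⁆ ^ (m * k) = 1) {x : G} (hx : x ∈ subgroupPow ⊤ m) : ⁅x, y⁆ ^ k = 1 := by
  have le_ker : subgroupPow ⊤ m ≤ (commutatorHom hG y ^ k).ker :=
    subgroupPow_le_iff.2 fun z _ => MonoidHom.mem_ker.2 <| Subtype.ext <| by
      change ⁅z ^ m, y⁆ ^ k = 1
      rw [commutatorElement_pow_left hG, ← pow_mul, h]
  exact congrArg Subtype.val (MonoidHom.mem_ker.1 (le_ker hx))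

theorem commutatorElement_pow_eq_one_of_mem_subgroupPow_of_mem_subgroupPow {m n k : ℕ}
    (h : ∀ x y : G, ⁅x, y⁆ ^ (m * (n * k)) = 1) {x y : G} (hx : x ∈ subgroupPow ⊤ m)
    (hy : y ∈ subgroupPow ⊤ n) : ⁅x, y⁆ ^ k = 1 := by
  have swapped : ⁅y, x⁆ ^ k = 1 :=
    commutatorElement_pow_eq_one_of_mem_subgroupPow hG (fun z => by
      rw [← commutatorElement_inv, inv_pow,
        commutatorElement_pow_eq_one_of_mem_subgroupPow hG (h · z) hx, inv_one]) hy
  rw [← commutatorElement_inv, inv_pow, swapped, inv_one]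

theorem pow_four_eq_one_of_mem_omegaSubgroup_two (h_eight : ∀ x y : G, ⁅x, y⁆ ^ 8 = 1) {x : G}
    (hx : x ∈ omegaSubgroup 2 2 (subgroupPow ⊤ 2)) : x ^ 4 = 1 := by
  refine pow_eq_one_of_mem_omegaSubgroup (p := 2) (i := 2) (fun y hy z hz => ?_) hx
  have sq_eq_one : ⁅z, y⁆ ^ 2 = 1 :=
    commutatorElement_pow_eq_one_of_mem_subgroupPow_of_mem_subgroupPow hG h_eight hz hy
  have choose_eq : (2 ^ 2).choose 2 = 2 * 3 := by decide
  rw [mul_pow_of_commutatorElement_mem_center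
    (commutatorElement_mem_center hG z y), choose_eq, pow_mul, sq_eq_one, one_pow, mul_one]

theorem not_commute_pow_pow {m n : ℕ} {a b : G} (hab : ⁅a, b⁆ ^ (m * n) ≠ 1) :
    ¬Commute (a ^ m) (b ^ n) := by
  rwa [← commutatorElement_eq_one_iff_commute, commutatorElement_pow_left hG,
    commutatorElement_pow_right hG, ← pow_mul']

theorem not_forall_mem_omegaSubgroup_two_mul_comm {a b : G} (ha : a ^ 8 = 1) (hb : b ^ 8 = 1)
    (hab : ⁅a, b⁆ ^ 4 ≠ 1) :
    ¬∀ x ∈ omegaSubgroup 2 2 (subgroupPow (⊤ : Subgroup G) 2),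
      ∀ y ∈ omegaSubgroup 2 2 (subgroupPow (⊤ : Subgroup G) 2), x * y = y * x := fun h =>
  not_commute_pow_pow (m := 2) (n := 2) hG hab <|
    h _ (pow_mem_omegaSubgroup_subgroupPow (mem_top a) ha) _
      (pow_mem_omegaSubgroup_subgroupPow (mem_top b) hb)

theorem mul_comm_of_isPowerful_omegaSubgroup_two (h_eight : ∀ x y : G, ⁅x, y⁆ ^ 8 = 1)
    (h_powerful : IsPowerful 2 ↥(omegaSubgroup 2 2 (subgroupPow (⊤ : Subgroup G) 2))) {x y : G}
    (hx : x ∈ omegaSubgroup 2 2 (subgroupPow ⊤ 2)) (hy : y ∈ omegaSubgroup 2 2 (subgroupPow ⊤ 2)) :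
    x * y = y * x :=
  congrArg Subtype.val <| h_powerful.commute_of_pow_four_eq_one
    (fun z => Subtype.ext (pow_four_eq_one_of_mem_omegaSubgroup_two hG h_eight z.2)) ⟨x, hx⟩ ⟨y, hy⟩

end ClassTwo

/-- The Heisenberg group of a biadditive map `β : A × B → C`: the central extension of `A × B` by
`C` with cocycle `((a, b), (a', b')) ↦ β a b'`. It supplies the group of the theorem. In terms of
the generators there, `⟨i, j, k⟩` stands for `b ^ j * a ^ i * c ^ k`. -/
structure HeisenbergGroup {A B C : Type*} [AddCommGroup A] [AddCommGroup B] [AddCommGroup C]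
    (β : A →+ B →+ C) where
  left : A
  right : B
  central : C

namespace HeisenbergGroup

variable {A B C : Type*} [AddCommGroup A] [AddCommGroup B] [AddCommGroup C] {β : A →+ B →+ C}

instance : Mul (HeisenbergGroup β) :=
  ⟨fun x y => ⟨x.left + y.left, x.right + y.right, x.central + y.central + β x.left y.right⟩⟩

instance : One (HeisenbergGroup β) := ⟨⟨0, 0, 0⟩⟩

instance : Inv (HeisenbergGroup β) :=
  ⟨fun x => ⟨-x.left, -x.right, -x.central + β x.left x.right⟩⟩

theorem mul_def (x y : HeisenbergGroup β) :
    x * y = ⟨x.left + y.left, x.right + y.right, x.central + y.central + β x.left y.right⟩ := rfl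

theorem one_def : (1 : HeisenbergGroup β) = ⟨0, 0, 0⟩ := rfl

theorem inv_def (x : HeisenbergGroup β) :
    x⁻¹ = ⟨-x.left, -x.right, -x.central + β x.left x.right⟩ := rfl

instance : Group (HeisenbergGroup β) := Group.ofLeftAxioms
  (fun x y z => by
    simp only [mul_def, map_add, AddMonoidHom.add_apply, mk.injEq]
    refine ⟨?_, ?_, ?_⟩ <;> abel)
  (fun x => by simp [mul_def, one_def])
  (fun x => by simp [mul_def, one_def, inv_def])

theorem pow_eq (x : HeisenbergGroup β) (n : ℕ) :
    x ^ n = ⟨n • x.left, n • x.right, n • x.central + n.choose 2 • β x.left x.right⟩ := by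
  induction n with
  | zero => simp [one_def]
  | succ n ih =>
    simp only [pow_succ, ih, mul_def, map_nsmul, AddMonoidHom.nsmul_apply,
      Nat.choose_succ_succ' n 1, Nat.choose_one_right, add_nsmul, one_nsmul, mk.injEq, true_and]
    abel

theorem mk_left_pow_eq_one {n : ℕ} {a : A} (h : n • a = 0) :
    (⟨a, 0, 0⟩ : HeisenbergGroup β) ^ n = 1 := by
  simp [pow_eq, one_def, h]

theorem mk_right_pow_eq_one {n : ℕ} {b : B} (h : n • b = 0) :
    (⟨0, b, 0⟩ : HeisenbergGroup β) ^ n = 1 := by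
  simp [pow_eq, one_def, h]

theorem commutatorElement_eq (x y : HeisenbergGroup β) :
    ⁅x, y⁆ = ⟨0, 0, β x.left y.right - β y.left x.right⟩ := by
  rw [commutatorElement_def, mul_assoc, ← mul_inv_rev, mul_inv_eq_iff_eq_mul]
  simp only [mul_def, map_zero, AddMonoidHom.zero_apply, mk.injEq]
  refine ⟨?_, ?_, ?_⟩ <;> abel

theorem commutator_le_center : commutator (HeisenbergGroup β) ≤ center (HeisenbergGroup β) := by
  rw [commutator_def, commutator_le]
  intro x _ y _
  rw [mem_center_iff]
  intro z
  simp [commutatorElement_eq, mul_def, add_comm]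

theorem commutator_le_subgroupPow {n : ℕ} (h : ∀ a b, ∃ c, n • c = β a b) :
    commutator (HeisenbergGroup β) ≤ subgroupPow ⊤ n := by
  rw [commutator_def, commutator_le]
  intro x _ y _
  obtain ⟨c, hc⟩ := h x.left y.right
  obtain ⟨d, hd⟩ := h y.left x.right
  have commutator_eq_pow : ⁅x, y⁆ = (⟨0, 0, c - d⟩ : HeisenbergGroup β) ^ n := by
    simp [commutatorElement_eq, pow_eq, nsmul_sub, hc, hd]
  exact commutator_eq_pow ▸ pow_mem_subgroupPow (mem_top _) n

theorem commutatorElement_pow_eq_one {n : ℕ} (h : ∀ a : A, n • a = 0) (x y : HeisenbergGroup β) :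
    ⁅x, y⁆ ^ n = 1 := by
  have nsmul_pairing (a : A) (b : B) : n • β a b = 0 := by
    rw [← AddMonoidHom.nsmul_apply, ← map_nsmul, h, map_zero, AddMonoidHom.zero_apply]
  simp [commutatorElement_eq, pow_eq, one_def, nsmul_sub, nsmul_pairing]

/-- The coordinates of a Heisenberg group (a bijection, not a homomorphism), used to count its
elements. -/
def equivProd : HeisenbergGroup β ≃ A × B × C where
  toFun x := (x.left, x.right, x.central)
  invFun t := ⟨t.1, t.2.1, t.2.2⟩

instance [Finite A] [Finite B] [Finite C] : Finite (HeisenbergGroup β) :=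
  Finite.of_equiv _ equivProd.symm

theorem card_eq : Nat.card (HeisenbergGroup β) = Nat.card A * (Nat.card B * Nat.card C) := by
  rw [Nat.card_congr equivProd, Nat.card_prod, Nat.card_prod]

end HeisenbergGroup

/-- The homomorphism `ℤ/8 → ℤ/32` sending `1` to `4`. -/
def fourMulHom : ZMod 8 →+ ZMod 32 :=
  ZMod.lift 8 ⟨zmultiplesHom (ZMod 32) 4, by decide⟩

/-- The pairing `(i, j) ↦ 4 i j` from `ℤ/8 × ℤ/8` to `ℤ/32`, whose Heisenberg group is the example
of the theorem. -/
def fourMulPairing : ZMod 8 →+ ZMod 8 →+ ZMod 32 :=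
  AddMonoidHom.mul.compr₂ fourMulHom

theorem exists_four_nsmul_eq_fourMulPairing (i j : ZMod 8) :
    ∃ k, 4 • k = fourMulPairing i j := by
  obtain ⟨n, hn⟩ := ZMod.intCast_surjective (i * j)
  refine ⟨n, ?_⟩
  change 4 • (n : ZMod 32) = fourMulHom (i * j)
  rw [← hn, fourMulHom, ZMod.lift_coe, zmultiplesHom_apply]
  simp [mul_comm]

theorem fourMulPairing_commutatorElement_pow_four_ne_one :
    ⁅(⟨1, 0, 0⟩ : HeisenbergGroup fourMulPairing),
      (⟨0, 1, 0⟩ : HeisenbergGroup fourMulPairing)⁆ ^ 4 ≠ 1 := by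
  have pairing_ne : 4 • fourMulPairing 1 1 ≠ 0 := by decide
  simpa [HeisenbergGroup.commutatorElement_eq, HeisenbergGroup.pow_eq, HeisenbergGroup.one_def]
    using pairing_ne

theorem omega_statement_13 :
    ∃ (G : Type) (_ : Group G) (_ : Finite G),
      IsPGroup 2 G ∧ IsPowerful 2 G ∧
      ¬(∀ x ∈ omegaSubgroup 2 2 (subgroupPow (⊤ : Subgroup G) 2),
          ∀ y ∈ omegaSubgroup 2 2 (subgroupPow (⊤ : Subgroup G) 2), x * y = y * x) ∧
      ¬IsPowerful 2 ↥(omegaSubgroup 2 2 (subgroupPow (⊤ : Subgroup G) 2)) := by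
  let G := HeisenbergGroup fourMulPairing
  have card_eq : Nat.card G = 2 ^ 11 := by simp [G, HeisenbergGroup.card_eq]
  have powerful : IsPowerful 2 G := isPowerful_two_iff.2 <|
    HeisenbergGroup.commutator_le_subgroupPow exists_four_nsmul_eq_fourMulPairing
  have class_two : commutator G ≤ center G := HeisenbergGroup.commutator_le_center
  have commutator_pow : ∀ x y : G, ⁅x, y⁆ ^ 8 = 1 :=
    HeisenbergGroup.commutatorElement_pow_eq_one (by decide)
  have not_abelian := not_forall_mem_omegaSubgroup_two_mul_comm class_two
    (HeisenbergGroup.mk_left_pow_eq_one (by decide))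
    (HeisenbergGroup.mk_right_pow_eq_one (by decide))
    fourMulPairing_commutatorElement_pow_four_ne_one
  exact ⟨G, inferInstance, inferInstance, IsPGroup.of_card card_eq, powerful, not_abelian,
    fun omega_powerful => not_abelian fun _ hx _ hy =>
      mul_comm_of_isPowerful_omegaSubgroup_two class_two commutator_pow omega_powerful hx hy⟩
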